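/- For every n ≥ 1 and every γ ∈ ((n+1)/(n+2), 1], the γ-Hölder homotopy group π_n^γ(ℍ^n) is nontrivial. Concretely: there exists a map f : S^n → ℝ^{2n+1} (S^n the unit sphere in ℝ^{n+1}) which is Lipschitz as a map into ℍ^n (there is L with d_K(f(x), f(y)) ≤ L·|x−y| for all x, y ∈ S^n), in particular γ-Hölder into ℍ^n, such that there exists no map F : B̄^{n+1} → ℝ^{2n+1} with F restricted to S^n equal to f and with F γ-Hölder continuous as a map into ℍ^n (i.e. d_K(F(x), F(y)) ≤ C·|x−y|^γ for some C and all x, y in the closed unit ball B̄^{n+1}). -/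

import Mathlib

open Metric Set MeasureTheory Topology

/-- The index of the coordinate `x_j` in `ℝ^{2n+1}`. -/
def xI (n : ℕ) (j : Fin n) : Fin (2*n+1) := ⟨2*j.1, by have := j.2; omega⟩

/-- The index of the coordinate `y_j` in `ℝ^{2n+1}`. -/
def yI (n : ℕ) (j : Fin n) : Fin (2*n+1) := ⟨2*j.1+1, by have := j.2; omega⟩

/-- The index of the coordinate `t` in `ℝ^{2n+1}`. -/
def tI (n : ℕ) : Fin (2*n+1) := Fin.last (2*n)

/-- The Korányi metric on the Heisenberg group `ℍ^n = ℝ^{2n+1}`: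
`d_K(p,q) = (|z-z'|^4 + |t - t' + 2 ∑_j (x_j' y_j - x_j y_j')|^2)^{1/4}`. -/
noncomputable def dK (n : ℕ) (p q : EuclideanSpace ℝ (Fin (2*n+1))) : ℝ :=
  ((∑ i : Fin (2*n), (p (Fin.castSucc i) - q (Fin.castSucc i)) ^ 2) ^ 2 +
    (p (tI n) - q (tI n) +
      2 * ∑ j : Fin n, (q (xI n j) * p (yI n j) - p (xI n j) * q (yI n j))) ^ 2) ^ ((1:ℝ)/4)

/-
Push a map `F : B̄^{n+1} → ℍ^n` forward to `ℝ^n × ℝ` by the front projection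
`(x, y, t) ↦ (x, t + 2 ∑_j x_j y_j)`. A Korányi ball of radius `r` projects into a slab of width
`O(r)` in the `n` directions of `x` and of height `O(r²)` over an affine hyperplane, hence has
projected volume `O(r^{n+2})`. If `F` is `γ`-Hölder with `(n+2)γ > n+1`, covering the ball by small
balls shows that the projection of `F(B̄^{n+1})` is a null set.

The Legendrian lift of the Whitney sphere is Lipschitz into `ℍ^n`, and on `S^n` its front projection
is the restriction of a homeomorphism `ℝ^{n+1} → ℝ^n × ℝ`. By the no-retraction theorem the
projection of any Hölder extension covers the homeomorphic image of the whole ball, which is not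
null.

No retraction onto a sphere exists, after Milnor and Rogers, because `∫ det(1 + φ')` over the ball
equals the volume of the ball when `φ` vanishes on the boundary, whereas the Jacobian of a map into
the sphere vanishes identically.
-/

open scoped NNReal

section VolumePreservation

lemma exists_eval_eq_sum_eval_mul {k : Type*} [Field k] {τ : ℕ → k} (hτ : Function.Injective τ)
    (d : ℕ) (x : k) : ∃ c : ℕ → k, ∀ p : Polynomial k, p.natDegree ≤ d →
      p.eval x = ∑ i ∈ Finset.range (d + 1), p.eval (τ i) * c i := by
  refine ⟨fun i => (Lagrange.basis (Finset.range (d + 1)) τ i).eval x, fun p hp => ?_⟩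
  have hdeg : p.degree < (Finset.range (d + 1)).card := by
    rw [Finset.card_range]
    exact Polynomial.degree_le_natDegree.trans_lt (by exact_mod_cast Nat.lt_succ_of_le hp)
  have hinterp := congrArg (Polynomial.eval x) (Lagrange.eq_interpolate hτ.injOn hdeg)
  simpa [Lagrange.interpolate_apply, Polynomial.eval_finsetSum] using hinterp

variable {E : Type*} [NormedAddCommGroup E] [NormedSpace ℝ E]

lemma det_one_add_pos_of_norm_lt_one [FiniteDimensional ℝ E] {A : E →L[ℝ] E} (hA : ‖A‖ < 1) :
    0 < (1 + A).det := by
  have : CompleteSpace E := FiniteDimensional.complete ℝ E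
  have hne : ∀ t ∈ Icc (0 : ℝ) 1, (1 + t • A).det ≠ 0 := by
    intro t ht
    have hlt : ‖-(t • A)‖ < 1 := by
      rw [norm_neg, norm_smul, Real.norm_of_nonneg ht.1]
      exact (mul_le_of_le_one_left (norm_nonneg A) ht.2).trans_lt hA
    have hunit : IsUnit (1 + t • A) := by simpa using isUnit_one_sub_of_norm_lt_one hlt
    exact ((hunit.map ContinuousLinearMap.toLinearMapRingHom).map LinearMap.det).ne_zero
  have hcont : ContinuousOn (fun t : ℝ => (1 + t • A).det) (Icc 0 1) :=
    (ContinuousLinearMap.continuous_det.comp (by fun_prop)).continuousOn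
  by_contra! hle
  obtain ⟨t, ht, h0⟩ := intermediate_value_Icc' zero_le_one hcont
    (show (0 : ℝ) ∈ Icc _ _ by simpa [ContinuousLinearMap.det] using hle)
  exact hne t ht h0

lemma exists_polynomial_eval_eq_det_one_add_smul [FiniteDimensional ℝ E] (A : E →L[ℝ] E) :
    ∃ p : Polynomial ℝ, p.natDegree ≤ Module.finrank ℝ E ∧
      ∀ t : ℝ, p.eval t = (1 + t • A).det := by
  let b := Module.finBasis ℝ E
  let M := LinearMap.toMatrix b b (A : E →ₗ[ℝ] E)
  refine ⟨((Polynomial.X : Polynomial ℝ) • M.map Polynomial.C +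
    (1 : Matrix _ _ ℝ).map Polynomial.C).det, ?_, fun t => ?_⟩
  · simpa using Polynomial.natDegree_det_X_add_C_le M 1
  · rw [ContinuousLinearMap.det, ← LinearMap.det_toMatrix b, ← Polynomial.coe_evalRingHom,
      RingHom.map_det]
    congr 1
    ext i j
    by_cases hij : i = j <;> simp [hij, M, LinearMap.toMatrix_apply, add_comm, mul_comm t]

variable {φ : E → E} {K : ℝ≥0} {s : Set E}

lemma bijective_id_add_of_lipschitzWith [CompleteSpace E] (hK : K < 1) (hφ : LipschitzWith K φ) :
    Function.Bijective fun x => x + φ x := by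
  have happrox : ApproximatesLinearOn (fun x => x + φ x)
      (ContinuousLinearEquiv.refl ℝ E : E →L[ℝ] E) univ K := by
    rw [ApproximatesLinearOn.approximatesLinearOn_iff_lipschitzOnWith, lipschitzOnWith_univ]
    convert! hφ using 1
    ext x
    simp
  have hK' : Subsingleton E ∨
      K < ‖((ContinuousLinearEquiv.refl ℝ E).symm : E →L[ℝ] E)‖₊⁻¹ := by
    rcases subsingleton_or_nontrivial E with hE | hE
    · exact Or.inl hE
    · exact Or.inr (by simpa using hK)
  exact ⟨injOn_univ.1 (happrox.injOn hK'), happrox.surjective hK'⟩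

lemma image_eq_self_of_eqOn_compl {α : Type*} {f : α → α} {s : Set α}
    (hbij : Function.Bijective f) (hf : EqOn f id sᶜ) : f '' s = s := by
  have hcompl : f '' sᶜ = sᶜ := hf.image_eq.trans (image_id _)
  rw [← compl_inj_iff, ← image_compl_eq hbij, hcompl]

variable [FiniteDimensional ℝ E] [MeasurableSpace E] [BorelSpace E] {φ' : E → E →L[ℝ] E}
  {μ : Measure E} [μ.IsAddHaarMeasure]

lemma integrableOn_and_setIntegral_det_one_add_of_lt_one (hK : K < 1) (hφ : LipschitzWith K φ)
    (hs : MeasurableSet s) (hμs : μ s ≠ ⊤) (h0 : ∀ x ∉ s, φ x = 0)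
    (hφ' : ∀ x ∈ s, HasFDerivAt φ (φ' x) x) :
    IntegrableOn (fun x => (1 + φ' x).det) s μ ∧ ∫ x in s, (1 + φ' x).det ∂μ = μ.real s := by
  have : CompleteSpace E := FiniteDimensional.complete ℝ E
  have hbij := bijective_id_add_of_lipschitzWith hK hφ
  have himage : (fun x => x + φ x) '' s = s :=
    image_eq_self_of_eqOn_compl hbij fun x hx => by simp [h0 x hx]
  have hderiv : ∀ x ∈ s, HasFDerivWithinAt (fun x => x + φ x) (1 + φ' x) s x := fun x hx =>
    ((hasFDerivAt_id x).add (hφ' x hx)).hasFDerivWithinAt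
  have habs : EqOn (fun x => |(1 + φ' x).det| • (1 : ℝ)) (fun x => (1 + φ' x).det) s := by
    intro x hx
    have hnorm : ‖φ' x‖ < 1 := ((hφ' x hx).le_of_lipschitz hφ).trans_lt (by exact_mod_cast hK)
    simp [abs_of_pos (det_one_add_pos_of_norm_lt_one hnorm)]
  constructor
  · rw [← integrableOn_congr_fun habs hs,
      ← integrableOn_image_iff_integrableOn_abs_det_fderiv_smul μ hs hderiv hbij.injective.injOn
        fun _ => (1 : ℝ), himage]
    exact integrableOn_const hμs
  · rw [← setIntegral_congr_fun hs habs,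
      ← integral_image_eq_integral_abs_det_fderiv_smul μ hs hderiv hbij.injective.injOn
        fun _ => (1 : ℝ), himage]
    simp

theorem setIntegral_det_one_add_eq_measureReal (hφ : LipschitzWith K φ) (hs : MeasurableSet s)
    (hμs : μ s ≠ ⊤) (h0 : ∀ x ∉ s, φ x = 0) (hφ' : ∀ x ∈ s, HasFDerivAt φ (φ' x) x) :
    ∫ x in s, (1 + φ' x).det ∂μ = μ.real s := by
  let τ : ℕ → ℝ := fun i => ((K + 1) * (i + 1))⁻¹
  have hτ : Function.Injective τ := fun i j hij => by
    have := mul_left_cancel₀ (by positivity) (inv_injective hij)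
    exact_mod_cast add_right_cancel this
  have hsmall : ∀ i, IntegrableOn (fun x => (1 + τ i • φ' x).det) s μ ∧
      ∫ x in s, (1 + τ i • φ' x).det ∂μ = μ.real s := by
    intro i
    refine integrableOn_and_setIntegral_det_one_add_of_lt_one (K := ‖τ i‖₊ * K) ?_
      ((lipschitzWith_smul (τ i)).comp hφ) hs hμs (fun x hx => ?_)
      fun x hx => (hφ' x hx).const_smul (τ i)
    · have hτi : 0 ≤ τ i := by positivity
      rw [← NNReal.coe_lt_coe, NNReal.coe_mul, coe_nnnorm, Real.norm_of_nonneg hτi, NNReal.coe_one,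
        inv_mul_lt_one₀ (by positivity)]
      nlinarith [K.2, (i.cast_nonneg : (0 : ℝ) ≤ i), mul_nonneg K.2 (i.cast_nonneg : (0 : ℝ) ≤ i)]
    · simp [h0 x hx]
  -- The determinant of `1 + t • φ' x` is polynomial in `t`, so its values at the small parameters
  -- `τ i` determine it at `t = 1`.
  obtain ⟨c, hc⟩ := exists_eval_eq_sum_eval_mul hτ (Module.finrank ℝ E) 1
  have hc_sum : ∑ i ∈ Finset.range (Module.finrank ℝ E + 1), c i = 1 := by
    simpa using (hc 1 (by simp)).symm
  have hdet : ∀ x, (1 + φ' x).det =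
      ∑ i ∈ Finset.range (Module.finrank ℝ E + 1), (1 + τ i • φ' x).det * c i := by
    intro x
    obtain ⟨p, hdeg, hp⟩ := exists_polynomial_eval_eq_det_one_add_smul (φ' x)
    simpa [hp] using hc p hdeg
  calc ∫ x in s, (1 + φ' x).det ∂μ = ∑ i ∈ Finset.range (Module.finrank ℝ E + 1),
          (∫ x in s, (1 + τ i • φ' x).det ∂μ) * c i := by
        simp_rw [hdet, ← integral_mul_const]
        exact integral_finsetSum _ fun i _ => (hsmall i).1.mul_const _
    _ = μ.real s := by
        simp_rw [(hsmall _).2]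
        rw [← Finset.mul_sum, hc_sum, mul_one]

end VolumePreservation

section NoRetraction

lemma inter_frontier_nonempty_of_isPreconnected {X : Type*} [TopologicalSpace X] {s t : Set X}
    (ht : IsPreconnected t) (hts : (t ∩ s).Nonempty) (hts' : (t \ s).Nonempty) :
    (t ∩ frontier s).Nonempty := by
  by_contra! hempty
  have hmem : ∀ x ∈ t, x ∉ closure s ∨ x ∈ interior s := fun x hx =>
    or_iff_not_imp_left.2 fun hcl => by_contra fun hint =>
      (eq_empty_iff_forall_notMem.1 hempty x) ⟨hx, not_not.1 hcl, hint⟩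
  obtain ⟨x, hxt, hxs⟩ := hts
  obtain ⟨y, hyt, hys⟩ := hts'
  obtain ⟨z, -, hz, hz'⟩ := ht (interior s) (closure s)ᶜ
    isOpen_interior isClosed_closure.isOpen_compl
    (fun z hz => (hmem z hz).symm)
    ⟨x, hxt, (hmem x hxt).resolve_left fun h => h (subset_closure hxs)⟩
    ⟨y, hyt, (hmem y hyt).resolve_right fun h => hys (interior_subset h)⟩
  exact hz' (interior_subset.trans subset_closure hz)

lemma lipschitzWith_indicator_of_eq_zero_on_frontier {E F : Type*} [NormedAddCommGroup E]
    [NormedSpace ℝ E] [NormedAddCommGroup F] {f : E → F} {s : Set E} {K : ℝ≥0}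
    (hf : LipschitzOnWith K f s) (hs : IsClosed s) (h0 : ∀ x ∈ frontier s, f x = 0) :
    LipschitzWith K (s.indicator f) := by
  have hcross : ∀ x ∈ s, ∀ y ∉ s, ‖f x‖ ≤ K * dist x y := by
    intro x hx y hy
    obtain ⟨z, hzseg, hz⟩ := inter_frontier_nonempty_of_isPreconnected
      (convex_segment x y).isPreconnected
      ⟨x, left_mem_segment ℝ x y, hx⟩ ⟨y, right_mem_segment ℝ x y, hy⟩
    have hxz : dist x z ≤ dist x y := by
      linarith [dist_add_dist_of_mem_segment hzseg, dist_nonneg (x := z) (y := y)]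
    calc ‖f x‖ = dist (f x) (f z) := by rw [h0 z hz, dist_zero_right]
      _ ≤ K * dist x z := hf.dist_le_mul x hx z (hs.frontier_subset hz)
      _ ≤ K * dist x y := by gcongr
  refine LipschitzWith.of_dist_le_mul fun x y => ?_
  by_cases hx : x ∈ s <;> by_cases hy : y ∈ s
  · simpa [hx, hy] using hf.dist_le_mul x hx y hy
  · simpa [hx, hy] using hcross x hx y hy
  · simpa [hx, hy, dist_comm] using hcross y hy x hx
  · simp only [indicator_of_notMem hx, indicator_of_notMem hy, dist_self]
    positivity

variable {E : Type*} [NormedAddCommGroup E] [InnerProductSpace ℝ E] [FiniteDimensional ℝ E]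

lemma det_eq_zero_of_eventually_mem_sphere {f : E → E} {f' : E →L[ℝ] E} {x a : E} {R : ℝ}
    (hf : HasFDerivAt f f' x) (hR : R ≠ 0) (hsphere : ∀ᶠ y in 𝓝 x, f y ∈ sphere a R) :
    f'.det = 0 := by
  have horth : ∀ v, inner ℝ (f x - a) (f' v) = 0 := by
    have hconst : (fun y => ‖f y - a‖ ^ 2) =ᶠ[𝓝 x] fun _ => R ^ 2 :=
      hsphere.mono fun y hy => by simp [mem_sphere_iff_norm.1 hy]
    have hderiv := (hf.sub_const a).norm_sq.unique
      ((hasFDerivAt_const (R ^ 2) x).congr_of_eventuallyEq hconst)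
    intro v
    simpa [inner_sub_left] using DFunLike.congr_fun hderiv v
  by_contra hdet
  obtain ⟨v, hv⟩ := (LinearMap.equivOfDetNeZero (f' : E →ₗ[ℝ] E) hdet).surjective (f x - a)
  have hnorm : ‖f x - a‖ = 0 := by
    rw [norm_eq_zero, ← inner_self_eq_zero (𝕜 := ℝ)]
    nth_rw 2 [← hv]
    exact horth v
  exact hR ((mem_sphere_iff_norm.1 hsphere.self_of_nhds).symm.trans hnorm)

theorem exists_notMem_sphere_of_contDiff {r : E → E} {a : E} {R : ℝ} (hr : ContDiff ℝ 1 r)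
    (hR : 0 < R) (hfix : ∀ x ∈ sphere a R, r x = x) : ∃ x, r x ∉ sphere a R := by
  borelize E
  by_contra! hsphere
  set φ : E → E := (closedBall a R).indicator fun x => r x - x
  obtain ⟨K, hK⟩ := (hr.sub contDiff_id).contDiffOn.exists_lipschitzOnWith one_ne_zero
    (convex_closedBall a R) (isCompact_closedBall a R)
  have hlip : LipschitzWith K φ := lipschitzWith_indicator_of_eq_zero_on_frontier hK
    isClosed_closedBall fun x hx => sub_eq_zero.2 (hfix x (frontier_closedBall_subset_sphere hx))
  have hzero : ∀ x ∉ ball a R, φ x = 0 := by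
    intro x hx
    refine indicator_apply_eq_zero.2 fun hx' => sub_eq_zero.2 (hfix x ?_)
    exact le_antisymm hx' (not_lt.1 hx)
  have hderiv : ∀ x ∈ ball a R, HasFDerivAt φ (fderiv ℝ r x - 1) x := fun x hx =>
    (((hr.differentiable one_ne_zero x).hasFDerivAt).sub (hasFDerivAt_id x)).congr_of_eventuallyEq
      (Filter.eventuallyEq_of_mem (isOpen_ball.mem_nhds hx) fun y hy =>
        indicator_of_mem (ball_subset_closedBall hy) _)
  have hvol := setIntegral_det_one_add_eq_measureReal (μ := Measure.addHaar) hlip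
    measurableSet_ball measure_ball_lt_top.ne hzero hderiv
  have hdet : ∀ x, (1 + (fderiv ℝ r x - 1)).det = 0 := fun x => by
    rw [add_sub_cancel]
    exact det_eq_zero_of_eventually_mem_sphere (hr.differentiable one_ne_zero x).hasFDerivAt hR.ne'
      (.of_forall hsphere)
  simp only [hdet, integral_zero] at hvol
  exact (ENNReal.toReal_pos (measure_ball_pos _ a hR).ne' measure_ball_lt_top.ne).ne hvol

theorem exists_eq_of_contDiff_of_eqOn_id {v : E → E} {a : E} {R : ℝ} (hv : ContDiff ℝ 1 v)
    (hR : 0 < R) (hid : EqOn v id (sphere a R)) : ∃ x, v x = a := by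
  by_contra! hne
  have hne' : ∀ x, v x - a ≠ 0 := fun x => sub_ne_zero.2 (hne x)
  have hsmooth : ContDiff ℝ 1 fun x => a + (R / ‖v x - a‖) • (v x - a) :=
    contDiff_const.add ((contDiff_const.div ((hv.sub contDiff_const).norm ℝ hne')
      fun x => norm_ne_zero_iff.2 (hne' x)).smul (hv.sub contDiff_const))
  obtain ⟨x, hx⟩ := exists_notMem_sphere_of_contDiff hsmooth hR fun x hx => by
    rw [hid hx, id, mem_sphere_iff_norm.1 hx, div_self hR.ne', one_smul, add_sub_cancel]
  refine hx (mem_sphere_iff_norm.2 ?_)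
  rw [add_sub_cancel_left, norm_smul, norm_div, norm_norm,
    div_mul_cancel₀ _ (norm_ne_zero_iff.2 (hne' x)), Real.norm_of_nonneg hR.le]

theorem closedBall_subset_image_of_eqOn_id {g : E → E} {c : E} {R : ℝ}
    (hg : ContinuousOn g (closedBall c R)) (hid : EqOn g id (sphere c R)) :
    closedBall c R ⊆ g '' closedBall c R := by
  classical
  intro a ha
  by_contra hag
  set u : E → E := (closedBall c R).piecewise g id with hu
  have hu_id : EqOn u id (closedBall c R)ᶜ := piecewise_eqOn_compl _ _ _
  have hu_cont : Continuous u := continuous_piecewise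
    (fun x hx => hid (frontier_closedBall_subset_sphere hx))
    (by rwa [isClosed_closedBall.closure_eq]) continuousOn_id
  have hu_ne : ∀ x, u x ≠ a := by
    intro x hx
    by_cases hxc : x ∈ closedBall c R
    · exact hag ⟨x, hxc, by rwa [hu, piecewise_eq_of_mem _ _ _ hxc] at hx⟩
    · exact hxc (by rwa [← hx, hu_id hxc] at ha)
  -- Approximating within `dist (u x) a` keeps the smooth map away from `a`.
  obtain ⟨v, hv, hvu, hv_eq, -⟩ := hu_cont.exists_contDiff_approx_and_eqOn 1
    (hu_cont.dist continuous_const) (fun x => dist_pos.2 (hu_ne x)) (S := (ball c (R + 1))ᶜ)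
    isOpen_ball.isClosed_compl (isClosed_closedBall.isOpen_compl.mem_nhdsSet.2
      (compl_subset_compl.2 (closedBall_subset_ball (lt_add_one R))))
    (contDiffOn_id.congr hu_id)
  have hv_id : EqOn v id (sphere a (2 * R + 1)) := by
    intro x hx
    have hxc : R + 1 ≤ dist x c := by
      linarith [mem_sphere.1 hx, mem_closedBall'.1 ha, dist_triangle x c a]
    exact (hv_eq (by simpa using hxc)).trans (hu_id (by simpa using by linarith))
  have hR : 0 ≤ R := dist_nonneg.trans ha
  obtain ⟨x, hx⟩ := exists_eq_of_contDiff_of_eqOn_id hv (by positivity) hv_id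
  exact (hvu x).ne (by rw [hx, dist_comm])

theorem image_closedBall_subset_image_of_eqOn_sphere {Y : Type*} [TopologicalSpace Y]
    (h : E ≃ₜ Y) {g : E → Y} {c : E} {R : ℝ} (hg : ContinuousOn g (closedBall c R))
    (hgh : EqOn g h (sphere c R)) : h '' closedBall c R ⊆ g '' closedBall c R := by
  have hsub := closedBall_subset_image_of_eqOn_id (g := h.symm ∘ g)
    (h.symm.continuous.comp_continuousOn hg) fun x hx => by simp [hgh hx]
  rwa [image_comp, Homeomorph.image_symm, ← image_subset_iff] at hsub

end NoRetraction

section MeasureImage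

open scoped ENNReal

theorem measure_image_eq_zero_of_frequently_measure_image_closedBall_le {α β : Type*}
    [MetricSpace α] [SecondCountableTopology α] [MeasurableSpace α] [OpensMeasurableSpace α]
    [HasBesicovitchCovering α] [MeasurableSpace β] {μ : Measure α} [SFinite μ] [μ.OuterRegular]
    {ν : Measure β} {f : α → β} {s : Set α} (hs : μ s ≠ ∞)
    (hf : ∀ x ∈ s, ∀ ε : ℝ≥0, 0 < ε →
      ∃ᶠ r in 𝓝[>] (0 : ℝ), ν (f '' (closedBall x r ∩ s)) ≤ ε * μ (closedBall x r)) :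
    ν (f '' s) = 0 := by
  by_contra hne
  obtain ⟨ε, hε, hlt⟩ := ENNReal.exists_nnreal_pos_mul_lt
    (ENNReal.add_ne_top.2 ⟨hs, ENNReal.one_ne_top⟩) hne
  obtain ⟨t, r, ht, -, hr, hst, hsum⟩ := Besicovitch.exists_closedBall_covering_tsum_measure_le μ
    one_ne_zero (fun x => {r | ν (f '' (closedBall x r ∩ s)) ≤ ε * μ (closedBall x r)}) s
    fun x hx δ hδ => ((hf x hx ε hε).and_eventually (Ioo_mem_nhdsGT hδ)).exists
  have hcover : f '' s ⊆ ⋃ x ∈ t, f '' (closedBall x (r x) ∩ s) := by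
    rw [← image_iUnion₂, ← iUnion₂_inter]
    exact image_mono (subset_inter hst subset_rfl)
  refine (hlt.trans_le ?_).false
  calc ν (f '' s) ≤ ∑' x : t, ν (f '' (closedBall x (r x) ∩ s)) :=
        (measure_mono hcover).trans (measure_biUnion_le ν ht _)
    _ ≤ ∑' x : t, ε * μ (closedBall x (r x)) := ENNReal.tsum_le_tsum fun x => hr x x.2
    _ = ε * ∑' x : t, μ (closedBall x (r x)) := ENNReal.tsum_mul_left
    _ ≤ ε * (μ s + 1) := by gcongr

theorem measure_image_eq_zero_of_measure_image_closedBall_le_rpow {E β : Type*}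
    [NormedAddCommGroup E] [NormedSpace ℝ E] [FiniteDimensional ℝ E] [MeasurableSpace E]
    [BorelSpace E] [MeasurableSpace β] {μ : Measure E} [μ.IsAddHaarMeasure] {ν : Measure β}
    {f : E → β} {s : Set E} {C δ : ℝ} (hδ : Module.finrank ℝ E < δ) (hs : μ s ≠ ∞)
    (hf : ∀ x ∈ s, ∀ r > 0, ν (f '' (closedBall x r ∩ s)) ≤ ENNReal.ofReal (C * r ^ δ)) :
    ν (f '' s) = 0 := by
  refine measure_image_eq_zero_of_frequently_measure_image_closedBall_le hs fun x hx ε hε =>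
    Filter.Eventually.frequently ?_
  set d := Module.finrank ℝ E
  set m := μ.real (ball 0 1)
  have hm : 0 < m := ENNReal.toReal_pos (measure_ball_pos μ 0 one_pos).ne' measure_ball_lt_top.ne
  have hlim : Filter.Tendsto (fun r : ℝ => C * r ^ (δ - d)) (𝓝[>] 0) (𝓝 0) := by
    have : ContinuousAt (fun r : ℝ => C * r ^ (δ - d)) 0 :=
      continuousAt_const.mul (Real.continuousAt_rpow_const _ _ (Or.inr (sub_pos.2 hδ).le))
    simpa [ContinuousAt, Real.zero_rpow (sub_pos.2 hδ).ne'] using this.mono_left nhdsWithin_le_nhds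
  filter_upwards [hlim.eventually (ge_mem_nhds (mul_pos (NNReal.coe_pos.2 hε) hm)),
    self_mem_nhdsWithin] with r hr (hr0 : 0 < r)
  calc ν (f '' (closedBall x r ∩ s)) ≤ ENNReal.ofReal (C * r ^ δ) := hf x hx r hr0
    _ = ENNReal.ofReal (C * r ^ (δ - d) * r ^ d) := by
        rw [Real.rpow_sub_natCast hr0.ne', mul_assoc, div_mul_cancel₀ _ (by positivity)]
    _ ≤ ENNReal.ofReal (ε * m * r ^ d) := by gcongr
    _ = ε * μ (closedBall x r) := by
        rw [μ.addHaar_closedBall x hr0.le, mul_right_comm, mul_assoc,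
          ENNReal.ofReal_mul ε.coe_nonneg, ENNReal.ofReal_mul (by positivity),
          ENNReal.ofReal_coe_nnreal, ofReal_measureReal]

lemma prod_volume_setOf_abs_sub_le_eq {α : Type*} [MeasurableSpace α] {μ : Measure α} [SFinite μ]
    {ψ : α → ℝ} (hψ : Measurable ψ) {s : Set α} (hs : MeasurableSet s) (b : ℝ) :
    (μ.prod volume) {p : α × ℝ | p.1 ∈ s ∧ |p.2 - ψ p.1| ≤ b} = μ s * ENNReal.ofReal (2 * b) := by
  have hmeas : MeasurableSet {p : α × ℝ | p.1 ∈ s ∧ |p.2 - ψ p.1| ≤ b} :=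
    (measurable_fst hs).inter <|
      measurableSet_le (measurable_snd.sub (hψ.comp measurable_fst)).norm measurable_const
  have hsection : ∀ x, volume (Prod.mk x ⁻¹' {p : α × ℝ | p.1 ∈ s ∧ |p.2 - ψ p.1| ≤ b}) =
      s.indicator (fun _ => ENNReal.ofReal (2 * b)) x := by
    intro x
    by_cases hx : x ∈ s
    · rw [indicator_of_mem hx, ← Real.volume_closedBall (ψ x)]
      congr 1
      ext y
      simp [hx, Real.dist_eq]
    · simp [hx]
  rw [Measure.prod_apply hmeas, lintegral_congr hsection, lintegral_indicator_const hs, mul_comm]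

end MeasureImage

section Heisenberg

variable {n : ℕ}

/-- The position of the `k`-th horizontal coordinate of index `j` (`x_j` for `k = 0`, `y_j` for
`k = 1`) among the first `2n` coordinates of `ℝ^{2n+1}`. -/
def horizEquiv (n : ℕ) : Fin n × Fin 2 ≃ Fin (2 * n) :=
  finProdFinEquiv.trans (finCongr (mul_comm n 2))

lemma castSucc_horizEquiv_zero (j : Fin n) : (horizEquiv n (j, 0)).castSucc = xI n j := by
  ext
  simp [horizEquiv, xI]

lemma castSucc_horizEquiv_one (j : Fin n) : (horizEquiv n (j, 1)).castSucc = yI n j := by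
  ext
  simp [horizEquiv, yI, add_comm]

lemma sum_castSucc_eq_sum_xI_add_yI {M : Type*} [AddCommMonoid M] (F : Fin (2 * n + 1) → M) :
    ∑ i : Fin (2 * n), F i.castSucc = ∑ j : Fin n, (F (xI n j) + F (yI n j)) := by
  rw [← (horizEquiv n).sum_comp, Fintype.sum_prod_type]
  simp_rw [Fin.sum_univ_two, castSucc_horizEquiv_zero, castSucc_horizEquiv_one]

/-- The point of the Heisenberg group `ℝ^{2n+1}` with coordinates `(x_j)`, `(y_j)` and `t`. -/
def ofCoords (x y : Fin n → ℝ) (t : ℝ) : EuclideanSpace ℝ (Fin (2 * n + 1)) :=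
  WithLp.toLp 2 (Fin.snoc (α := fun _ => ℝ)
    (fun i => ![x, y] ((horizEquiv n).symm i).2 ((horizEquiv n).symm i).1) t)

@[simp] lemma ofCoords_xI (x y : Fin n → ℝ) (t : ℝ) (j : Fin n) :
    ofCoords x y t (xI n j) = x j := by
  simp [ofCoords, ← castSucc_horizEquiv_zero]

@[simp] lemma ofCoords_yI (x y : Fin n → ℝ) (t : ℝ) (j : Fin n) :
    ofCoords x y t (yI n j) = y j := by
  simp [ofCoords, ← castSucc_horizEquiv_one]

@[simp] lemma ofCoords_tI (x y : Fin n → ℝ) (t : ℝ) : ofCoords x y t (tI n) = t := by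
  simp [ofCoords, tI]

/-- The `t`-component of `q⁻¹ * p` in the Heisenberg group. -/
def vertDiff (p q : EuclideanSpace ℝ (Fin (2 * n + 1))) : ℝ :=
  p (tI n) - q (tI n) + 2 * ∑ j : Fin n, (q (xI n j) * p (yI n j) - p (xI n j) * q (yI n j))

/-- The squared Euclidean distance of the horizontal components. -/
def horizSq (p q : EuclideanSpace ℝ (Fin (2 * n + 1))) : ℝ :=
  ∑ j : Fin n, ((p (xI n j) - q (xI n j)) ^ 2 + (p (yI n j) - q (yI n j)) ^ 2)

lemma horizSq_nonneg (p q : EuclideanSpace ℝ (Fin (2 * n + 1))) : 0 ≤ horizSq p q :=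
  Finset.sum_nonneg fun _ _ => by positivity

lemma dK_eq (p q : EuclideanSpace ℝ (Fin (2 * n + 1))) :
    dK n p q = (horizSq p q ^ 2 + vertDiff p q ^ 2) ^ ((4 : ℕ) : ℝ)⁻¹ := by
  rw [dK, sum_castSucc_eq_sum_xI_add_yI (fun i => (p i - q i) ^ 2)]
  norm_num [horizSq, vertDiff]

lemma dK_nonneg (p q : EuclideanSpace ℝ (Fin (2 * n + 1))) : 0 ≤ dK n p q := by
  rw [dK_eq]
  positivity

lemma dK_pow_four (p q : EuclideanSpace ℝ (Fin (2 * n + 1))) :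
    dK n p q ^ 4 = horizSq p q ^ 2 + vertDiff p q ^ 2 := by
  rw [dK_eq, Real.rpow_inv_natCast_pow (by positivity) (by norm_num)]

lemma horizSq_le_dK_sq (p q : EuclideanSpace ℝ (Fin (2 * n + 1))) :
    horizSq p q ≤ dK n p q ^ 2 := by
  refine le_of_sq_le_sq ?_ (by positivity)
  rw [← pow_mul, dK_pow_four]
  exact le_add_of_nonneg_right (sq_nonneg _)

lemma abs_vertDiff_le_dK_sq (p q : EuclideanSpace ℝ (Fin (2 * n + 1))) :
    |vertDiff p q| ≤ dK n p q ^ 2 := by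
  refine abs_le_of_sq_le_sq ?_ (by positivity)
  rw [← pow_mul, dK_pow_four]
  exact le_add_of_nonneg_left (sq_nonneg _)

end Heisenberg

section FrontProjection

variable {n : ℕ}

/-- The front projection `(x, y, t) ↦ (x, t + 2 ∑_j x_j y_j)`. Its last component is chosen so that
it differs by `4 ∑_j y_j dx_j` along horizontal directions. -/
def frontProj (p : EuclideanSpace ℝ (Fin (2 * n + 1))) : (Fin n → ℝ) × ℝ :=
  (fun j => p (xI n j), p (tI n) + 2 * ∑ j : Fin n, p (xI n j) * p (yI n j))

/-- The affine function whose graph is the front projection of the horizontal subspace at `p`. -/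
def frontPlane (p : EuclideanSpace ℝ (Fin (2 * n + 1))) (x : Fin n → ℝ) : ℝ :=
  (frontProj p).2 + 4 * ∑ j : Fin n, p (yI n j) * (x j - p (xI n j))

lemma continuous_frontPlane (p : EuclideanSpace ℝ (Fin (2 * n + 1))) :
    Continuous (frontPlane p) := by
  unfold frontPlane
  fun_prop

lemma frontPlane_frontProj_fst (p : EuclideanSpace ℝ (Fin (2 * n + 1))) :
    frontPlane p (frontProj p).1 = (frontProj p).2 := by
  simp [frontPlane, frontProj]

lemma dist_frontProj_fst_le (q p : EuclideanSpace ℝ (Fin (2 * n + 1))) :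
    dist (frontProj q).1 (frontProj p).1 ≤ dK n q p := by
  refine (dist_pi_le_iff (dK_nonneg q p)).2 fun j => ?_
  refine abs_le_of_sq_le_sq ?_ (dK_nonneg q p)
  calc (q (xI n j) - p (xI n j)) ^ 2
      ≤ (q (xI n j) - p (xI n j)) ^ 2 + (q (yI n j) - p (yI n j)) ^ 2 :=
        le_add_of_nonneg_right (sq_nonneg _)
    _ ≤ horizSq q p := Finset.single_le_sum
        (f := fun j => (q (xI n j) - p (xI n j)) ^ 2 + (q (yI n j) - p (yI n j)) ^ 2)
        (fun i _ => by positivity) (Finset.mem_univ j)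
    _ ≤ dK n q p ^ 2 := horizSq_le_dK_sq q p

lemma frontProj_snd_sub_frontPlane (q p : EuclideanSpace ℝ (Fin (2 * n + 1))) :
    (frontProj q).2 - frontPlane p (frontProj q).1 = vertDiff q p +
      ∑ j : Fin n, 2 * ((q (xI n j) - p (xI n j)) * (q (yI n j) - p (yI n j))) := by
  simp only [frontPlane, frontProj, vertDiff, mul_sub, sub_mul, Finset.sum_sub_distrib,
    ← Finset.mul_sum, mul_comm (p (yI n _))]
  ring

lemma abs_frontProj_snd_sub_frontPlane_le (q p : EuclideanSpace ℝ (Fin (2 * n + 1))) :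
    |(frontProj q).2 - frontPlane p (frontProj q).1| ≤ 2 * dK n q p ^ 2 := by
  have hcross : |∑ j : Fin n, 2 * ((q (xI n j) - p (xI n j)) * (q (yI n j) - p (yI n j)))| ≤
      horizSq q p :=
    (Finset.abs_sum_le_sum_abs _ _).trans <| Finset.sum_le_sum fun j _ => by
      rw [← mul_assoc, abs_mul, abs_mul, abs_two, ← sq_abs (q (xI n j) - _),
        ← sq_abs (q (yI n j) - _)]
      exact two_mul_le_add_sq _ _
  calc |(frontProj q).2 - frontPlane p (frontProj q).1|
      ≤ |vertDiff q p| + horizSq q p := by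
        rw [frontProj_snd_sub_frontPlane]
        exact (abs_add_le _ _).trans (by gcongr)
    _ ≤ 2 * dK n q p ^ 2 := by linarith [abs_vertDiff_le_dK_sq q p, horizSq_le_dK_sq q p]

lemma tendsto_frontProj_of_tendsto_dK {α : Type*} {l : Filter α}
    {G : α → EuclideanSpace ℝ (Fin (2 * n + 1))} {p : EuclideanSpace ℝ (Fin (2 * n + 1))}
    (hG : Filter.Tendsto (fun a => dK n (G a) p) l (𝓝 0)) :
    Filter.Tendsto (fun a => frontProj (G a)) l (𝓝 (frontProj p)) := by
  have hfst : Filter.Tendsto (fun a => (frontProj (G a)).1) l (𝓝 (frontProj p).1) :=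
    tendsto_iff_dist_tendsto_zero.2 <|
      squeeze_zero (fun _ => dist_nonneg) (fun a => dist_frontProj_fst_le (G a) p) hG
  have hdiff : Filter.Tendsto (fun a => (frontProj (G a)).2 - frontPlane p (frontProj (G a)).1) l
      (𝓝 0) :=
    squeeze_zero_norm (fun a => abs_frontProj_snd_sub_frontPlane_le (G a) p)
      (by simpa using (hG.pow 2).const_mul 2)
  have hplane := ((continuous_frontPlane p).tendsto _).comp hfst
  rw [frontPlane_frontProj_fst] at hplane
  have hsnd : Filter.Tendsto (fun a => (frontProj (G a)).2) l (𝓝 (frontProj p).2) := by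
    simpa using hdiff.add hplane
  exact hfst.prodMk_nhds hsnd

lemma volume_frontProj_image_dK_le (p : EuclideanSpace ℝ (Fin (2 * n + 1))) {r : ℝ} (hr : 0 ≤ r) :
    volume (frontProj '' {q | dK n q p ≤ r}) ≤ ENNReal.ofReal ((2 * r) ^ (n + 2)) := by
  have hsub : frontProj '' {q | dK n q p ≤ r} ⊆
      {w | w.1 ∈ closedBall (frontProj p).1 r ∧ |w.2 - frontPlane p w.1| ≤ 2 * r ^ 2} := by
    rintro _ ⟨q, hq : dK n q p ≤ r, rfl⟩
    refine ⟨(dist_frontProj_fst_le q p).trans hq,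
      (abs_frontProj_snd_sub_frontPlane_le q p).trans ?_⟩
    have := dK_nonneg q p
    gcongr
  calc volume (frontProj '' {q | dK n q p ≤ r})
      ≤ ENNReal.ofReal ((2 * r) ^ n) * ENNReal.ofReal (2 * (2 * r ^ 2)) := by
        refine (measure_mono hsub).trans_eq ?_
        rw [Measure.volume_eq_prod, prod_volume_setOf_abs_sub_le_eq
          (continuous_frontPlane p).measurable isClosed_closedBall.measurableSet,
          Real.volume_pi_closedBall _ hr, Fintype.card_fin]
    _ = ENNReal.ofReal ((2 * r) ^ (n + 2)) := by
        rw [← ENNReal.ofReal_mul (by positivity)]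
        ring_nf

lemma continuousOn_frontProj_comp_of_holder {X : Type*} [PseudoMetricSpace X] {K : Set X}
    {F : X → EuclideanSpace ℝ (Fin (2 * n + 1))} {C γ : ℝ} (hγ : 0 < γ)
    (hF : ∀ x ∈ K, ∀ y ∈ K, dK n (F x) (F y) ≤ C * dist x y ^ γ) :
    ContinuousOn (fun x => frontProj (F x)) K := by
  intro x hx
  refine tendsto_frontProj_of_tendsto_dK (squeeze_zero' (.of_forall fun _ => dK_nonneg _ _)
    (eventually_mem_nhdsWithin.mono fun y hy => hF y hy x hx) ?_)
  have hcont : Continuous fun y => C * dist y x ^ γ :=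
    continuous_const.mul ((continuous_id.dist continuous_const).rpow_const fun _ => Or.inr hγ.le)
  simpa [Real.zero_rpow hγ.ne'] using hcont.continuousWithinAt.tendsto (x := x) (s := K)

theorem volume_frontProj_image_eq_zero_of_holder {E : Type*} [NormedAddCommGroup E]
    [NormedSpace ℝ E] [FiniteDimensional ℝ E] {K : Set E} (hK : Bornology.IsBounded K)
    {F : E → EuclideanSpace ℝ (Fin (2 * n + 1))} {C γ : ℝ}
    (hdim : Module.finrank ℝ E < γ * (n + 2))
    (hF : ∀ x ∈ K, ∀ y ∈ K, dK n (F x) (F y) ≤ C * dist x y ^ γ) :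
    volume ((fun x => frontProj (F x)) '' K) = 0 := by
  borelize E
  have hγ : 0 < γ := pos_of_mul_pos_left ((Nat.cast_nonneg _).trans_lt hdim) (by positivity)
  refine measure_image_eq_zero_of_measure_image_closedBall_le_rpow (μ := Measure.addHaar)
    (C := (2 * |C|) ^ (n + 2)) hdim hK.measure_lt_top.ne fun x hx r hr => ?_
  have hsub : (fun x => frontProj (F x)) '' (closedBall x r ∩ K) ⊆
      frontProj '' {q | dK n q (F x) ≤ |C| * r ^ γ} := by
    rintro _ ⟨y, ⟨hyr, hy⟩, rfl⟩
    refine mem_image_of_mem _ ((hF y hy x hx).trans ?_)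
    gcongr
    exacts [le_abs_self C, hyr]
  refine (measure_mono hsub).trans ((volume_frontProj_image_dK_le _ (by positivity)).trans_eq ?_)
  congr 1
  rw [← mul_assoc, mul_pow, ← Real.rpow_mul_natCast hr.le]
  norm_cast

end FrontProjection

section WhitneySphere

variable {n : ℕ}

/-- The Legendrian lift of the Whitney sphere `(s, x) ↦ (x, -s x)`, where `s = x_0`. The sign of the
`y`-component makes the last component of the front projection increasing in `s`. -/
noncomputable def whitneyLift (x : EuclideanSpace ℝ (Fin (n + 1))) :
    EuclideanSpace ℝ (Fin (2 * n + 1)) :=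
  ofCoords (fun j => x j.succ) (fun j => -x 0 * x j.succ) (2 * (x 0 - x 0 ^ 3 / 3))

lemma sum_succ_sq_of_mem_sphere {x : EuclideanSpace ℝ (Fin (n + 1))} (hx : x ∈ sphere 0 1) :
    ∑ j : Fin n, x j.succ ^ 2 = 1 - x 0 ^ 2 := by
  have h := EuclideanSpace.real_norm_sq_eq x
  rw [mem_sphere_zero_iff_norm.1 hx, Fin.sum_univ_succ] at h
  linarith

lemma dist_sq_eq_succ (x y : EuclideanSpace ℝ (Fin (n + 1))) :
    dist x y ^ 2 = (x 0 - y 0) ^ 2 + ∑ j : Fin n, (x j.succ - y j.succ) ^ 2 := by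
  simp [dist_eq_norm, EuclideanSpace.real_norm_sq_eq, Fin.sum_univ_succ]

variable {x y : EuclideanSpace ℝ (Fin (n + 1))}

lemma horizSq_whitneyLift_le (hx : x ∈ sphere 0 1) (hy : y ∈ sphere 0 1) :
    horizSq (whitneyLift x) (whitneyLift y) ≤ 3 * dist x y ^ 2 := by
  have hx0 : x 0 ^ 2 ≤ 1 := by
    rw [← sub_nonneg, ← sum_succ_sq_of_mem_sphere hx]
    positivity
  rw [dist_sq_eq_succ]
  set Q := ∑ j : Fin n, (x j.succ - y j.succ) ^ 2
  calc horizSq (whitneyLift x) (whitneyLift y)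
      ≤ ∑ j : Fin n, ((1 + 2 * x 0 ^ 2) * (x j.succ - y j.succ) ^ 2 +
          2 * (x 0 - y 0) ^ 2 * y j.succ ^ 2) := by
        refine Finset.sum_le_sum fun j _ => ?_
        simp only [whitneyLift, ofCoords_xI, ofCoords_yI]
        linarith [sq_nonneg (x 0 * (x j.succ - y j.succ) - (x 0 - y 0) * y j.succ)]
    _ = (1 + 2 * x 0 ^ 2) * Q + 2 * (x 0 - y 0) ^ 2 * (1 - y 0 ^ 2) := by
        rw [Finset.sum_add_distrib, ← Finset.mul_sum, ← Finset.mul_sum,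
          sum_succ_sq_of_mem_sphere hy]
    _ ≤ (1 + 2 * 1) * Q + 2 * (x 0 - y 0) ^ 2 * 1 := by
        gcongr
        exact sub_le_self 1 (sq_nonneg _)
    _ ≤ 3 * ((x 0 - y 0) ^ 2 + Q) := by linarith [sq_nonneg (x 0 - y 0)]

lemma vertDiff_whitneyLift (hx : x ∈ sphere 0 1) (hy : y ∈ sphere 0 1) :
    vertDiff (whitneyLift x) (whitneyLift y) =
      (x 0 - y 0) * ((x 0 - y 0) ^ 2 / 3 + ∑ j : Fin n, (x j.succ - y j.succ) ^ 2) := by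
  have hQ : ∑ j : Fin n, (x j.succ - y j.succ) ^ 2 =
      (1 - x 0 ^ 2) + (1 - y 0 ^ 2) - 2 * ∑ j : Fin n, x j.succ * y j.succ := by
    rw [← sum_succ_sq_of_mem_sphere hx, ← sum_succ_sq_of_mem_sphere hy, Finset.mul_sum,
      ← Finset.sum_add_distrib, ← Finset.sum_sub_distrib]
    exact Finset.sum_congr rfl fun j _ => by ring
  have hcross : ∑ j : Fin n, (y j.succ * (-x 0 * x j.succ) - x j.succ * (-y 0 * y j.succ)) =
      (y 0 - x 0) * ∑ j : Fin n, x j.succ * y j.succ := by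
    rw [Finset.mul_sum]
    exact Finset.sum_congr rfl fun j _ => by ring
  simp only [vertDiff, whitneyLift, ofCoords_xI, ofCoords_yI, ofCoords_tI, hcross, hQ]
  ring

lemma abs_vertDiff_whitneyLift_le (hx : x ∈ sphere 0 1) (hy : y ∈ sphere 0 1) :
    |vertDiff (whitneyLift x) (whitneyLift y)| ≤ 2 * dist x y ^ 2 := by
  have hs : |x 0 - y 0| ≤ 2 := by
    calc |x 0 - y 0| = ‖(x - y) 0‖ := rfl
      _ ≤ ‖x - y‖ := PiLp.norm_apply_le _ _
      _ ≤ ‖x‖ + ‖y‖ := norm_sub_le x y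
      _ = 2 := by
          rw [mem_sphere_zero_iff_norm.1 hx, mem_sphere_zero_iff_norm.1 hy, one_add_one_eq_two]
  rw [vertDiff_whitneyLift hx hy, abs_mul, dist_sq_eq_succ,
    abs_of_nonneg (a := _ + _) (by positivity)]
  gcongr
  exact div_le_self (sq_nonneg _) (by norm_num)

lemma dK_whitneyLift_le (hx : x ∈ sphere 0 1) (hy : y ∈ sphere 0 1) :
    dK n (whitneyLift x) (whitneyLift y) ≤ 2 * dist x y := by
  refine le_of_pow_le_pow_left₀ (n := 4) (by norm_num) (by positivity) ?_
  calc dK n (whitneyLift x) (whitneyLift y) ^ 4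
      = horizSq (whitneyLift x) (whitneyLift y) ^ 2 +
          |vertDiff (whitneyLift x) (whitneyLift y)| ^ 2 := by rw [dK_pow_four, sq_abs]
    _ ≤ (3 * dist x y ^ 2) ^ 2 + (2 * dist x y ^ 2) ^ 2 := by
        gcongr
        exacts [horizSq_nonneg _ _, horizSq_whitneyLift_le hx hy, abs_vertDiff_whitneyLift_le hx hy]
    _ ≤ (2 * dist x y) ^ 4 := by linarith [show 0 ≤ dist x y ^ 4 by positivity]

lemma surjective_pow_of_odd {k : ℕ} (hk : Odd k) : Function.Surjective fun s : ℝ => s ^ k :=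
  (continuous_pow k).surjective (Filter.tendsto_pow_atTop hk.pos.ne') <|
    (Filter.tendsto_neg_atTop_atBot.comp ((Filter.tendsto_pow_atTop hk.pos.ne').comp
      Filter.tendsto_neg_atBot_atTop)).congr fun s => by simp [hk.neg_pow]

/-- The homeomorphism `x ↦ (x_1, …, x_n, (4/3) x_0³)`; on the unit sphere it is the front projection
of `whitneyLift`. -/
noncomputable def whitneyFront (n : ℕ) : EuclideanSpace ℝ (Fin (n + 1)) ≃ₜ (Fin n → ℝ) × ℝ :=
  ((EuclideanSpace.equiv (Fin (n + 1)) ℝ).toHomeomorph.trans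
    (Fin.consEquivL ℝ fun _ => ℝ).symm.toHomeomorph).trans <|
  (Homeomorph.prodComm _ _).trans <| (Homeomorph.refl _).prodCongr <|
    ((Odd.strictMono_pow (by decide : Odd 3)).orderIsoOfSurjective (fun s : ℝ => s ^ 3)
      (surjective_pow_of_odd (by decide))).toHomeomorph.trans
    (Homeomorph.mulLeft₀ (4 / 3) (by norm_num))

lemma whitneyFront_apply (x : EuclideanSpace ℝ (Fin (n + 1))) :
    whitneyFront n x = (fun j => x j.succ, 4 / 3 * x 0 ^ 3) := rfl

lemma frontProj_whitneyLift (hx : x ∈ sphere 0 1) :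
    frontProj (whitneyLift x) = whitneyFront n x := by
  have hsum : ∑ j : Fin n, x j.succ * (-x 0 * x j.succ) = -x 0 * (1 - x 0 ^ 2) := by
    rw [← sum_succ_sq_of_mem_sphere hx, Finset.mul_sum]
    exact Finset.sum_congr rfl fun j _ => by ring
  simp only [frontProj, whitneyLift, ofCoords_xI, ofCoords_yI, ofCoords_tI, hsum,
    whitneyFront_apply, Prod.mk.injEq, true_and]
  ring

end WhitneySphere

/-- For `γ ∈ ((n+1)/(n+2), 1]` the Hölder homotopy group `π_n^γ(ℍ^n)` is
nontrivial: there is a map `f : S^n → ℝ^{2n+1}` which is Lipschitz into `ℍ^n` but admits no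
`γ`-Hölder (into `ℍ^n`) extension `F : B̄^{n+1} → ℝ^{2n+1}`. -/
theorem stmt3 (n : ℕ) (hn : 1 ≤ n) (γ : ℝ)
    (hγ1 : ((n:ℝ)+1)/((n:ℝ)+2) < γ) (hγ2 : γ ≤ 1) :
    ∃ f : EuclideanSpace ℝ (Fin (n+1)) → EuclideanSpace ℝ (Fin (2*n+1)),
      (∃ L : ℝ, ∀ x ∈ sphere (0 : EuclideanSpace ℝ (Fin (n+1))) 1,
          ∀ y ∈ sphere (0 : EuclideanSpace ℝ (Fin (n+1))) 1,
          dK n (f x) (f y) ≤ L * dist x y) ∧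
      ¬ ∃ F : EuclideanSpace ℝ (Fin (n+1)) → EuclideanSpace ℝ (Fin (2*n+1)),
          (∀ x ∈ sphere (0 : EuclideanSpace ℝ (Fin (n+1))) 1, F x = f x) ∧
          ∃ C : ℝ, ∀ x ∈ closedBall (0 : EuclideanSpace ℝ (Fin (n+1))) 1,
              ∀ y ∈ closedBall (0 : EuclideanSpace ℝ (Fin (n+1))) 1,
              dK n (F x) (F y) ≤ C * dist x y ^ γ := by
  have hγ : 0 < γ := lt_trans (by positivity) hγ1
  refine ⟨whitneyLift, ⟨2, fun x hx y hy => dK_whitneyLift_le hx hy⟩, ?_⟩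
  rintro ⟨F, hFS, C, hF⟩
  have hnull : volume ((fun x => frontProj (F x)) '' closedBall 0 1) = 0 :=
    volume_frontProj_image_eq_zero_of_holder isBounded_closedBall
      (by simpa using (div_lt_iff₀ (by positivity)).1 hγ1) hF
  have hcover : whitneyFront n '' closedBall 0 1 ⊆ (fun x => frontProj (F x)) '' closedBall 0 1 :=
    image_closedBall_subset_image_of_eqOn_sphere (whitneyFront n)
      (continuousOn_frontProj_comp_of_holder hγ hF) fun x hx =>
        (congrArg frontProj (hFS x hx)).trans (frontProj_whitneyLift hx)
  have hopen : IsOpen (whitneyFront n '' ball 0 1) := (whitneyFront n).isOpenMap _ isOpen_ball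
  exact (hopen.measure_pos volume ((nonempty_ball.2 one_pos).image _)).ne'
    (measure_mono_null ((image_mono ball_subset_closedBall).trans hcover) hnull)
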